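/- Let n ≥ 1 and 1 ≤ m ≤ n. In the hyperoctahedral group B_n, let W_P = {w ∈ B_n : w(j) > 0 for all 1 ≤ j ≤ n} and W_Q = {w ∈ B_n : w({1,…,m}) = {1,…,m}}. Then two elements w, w' ∈ B_n lie in the same (W_P, W_Q) double coset if and only if #{j ∈ {1,…,m} : w(j) > 0} = #{j ∈ {1,…,m} : w'(j) > 0}; consequently the (W_P, W_Q) double cosets are exactly the m+1 sets E_d = {w : #{j ∈ {1,…,m} : w(j) > 0} = d} for 0 ≤ d ≤ m. -/

import Mathlib

/-- The set `{−n, …, −1, 1, …, n}` of signed indices. -/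
def SIdx (n : ℕ) : Type := {x : ℤ // x ≠ 0 ∧ x.natAbs ≤ n}

instance (n : ℕ) : Neg (SIdx n) :=
  ⟨fun x => ⟨-x.1, ⟨neg_ne_zero.mpr x.2.1, by simpa using x.2.2⟩⟩⟩

/-- Membership in the hyperoctahedral group `B_n`: a permutation `w` of
`{−n, …, −1, 1, …, n}` satisfying `w(−x) = −w(x)` for all `x`. -/
def IsSignedPerm {n : ℕ} (w : Equiv.Perm (SIdx n)) : Prop :=
  ∀ x : SIdx n, w (-x) = -(w x)

/-- `W_P = {w ∈ B_n : w(j) > 0 for all 1 ≤ j ≤ n}`. -/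
def InWP {n : ℕ} (h : Equiv.Perm (SIdx n)) : Prop :=
  IsSignedPerm h ∧ ∀ x : SIdx n, 0 < x.1 → 0 < (h x).1

/-- `W_Q = {w ∈ B_n : w({1,…,m}) = {1,…,m}}`. -/
def InWQ {n : ℕ} (m : ℕ) (k : Equiv.Perm (SIdx n)) : Prop :=
  IsSignedPerm k ∧
    ⇑k '' {x : SIdx n | 0 < x.1 ∧ x.1 ≤ (m : ℤ)} = {x : SIdx n | 0 < x.1 ∧ x.1 ≤ (m : ℤ)}

/-- `w` and `w'` lie in the same `(W_P, W_Q)` double coset. -/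
def SameDC {n : ℕ} (m : ℕ) (w w' : Equiv.Perm (SIdx n)) : Prop :=
  ∃ h k : Equiv.Perm (SIdx n), InWP h ∧ InWQ m k ∧ w' = h * w * k

/-- `#{j ∈ {1,…,m} : w(j) > 0}`. -/
noncomputable def posCount {n : ℕ} (m : ℕ) (w : Equiv.Perm (SIdx n)) : ℕ :=
  Set.ncard {x : SIdx n | 0 < x.1 ∧ x.1 ≤ (m : ℤ) ∧ 0 < (w x).1}

/-!
An element `w` of `B_n` is determined up to left multiplication by `W_P` by the set
`H = w⁻¹({1, …, n})`, which contains exactly one element of each pair `{x, -x}`; call such a set a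
half. So the double cosets correspond to the orbits of `W_Q` on halves. Writing `I = {1, …, m}`,
an element of `W_Q` preserves `|I ∩ H|`. Conversely, if `|I ∩ H| = |I ∩ H'|`, then some permutation
of `I` carries `I ∩ H'` onto `I ∩ H`; extended to `-I` by oddness, it reduces to the case
`I ∩ H = I ∩ H'`, where changing the signs of the points at which `H` and `H'` disagree carries one
half to the other and fixes `I`.
-/

section Perm

open Equiv

variable {α : Type*}

theorem exists_perm_preimage_eq_of_ncard_eq [Finite α] {A B : Set α}
    (h : A.ncard = B.ncard) : ∃ s : Perm α, s ⁻¹' A = B := by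
  lift A to Finset α using A.toFinite
  lift B to Finset α using B.toFinite
  rw [Set.ncard_coe_finset, Set.ncard_coe_finset] at h
  obtain ⟨s, hs⟩ := Perm.exists_map_finset_eq B A h.symm
  refine ⟨s, ?_⟩
  rw [← hs, Finset.coe_map]
  exact s.injective.preimage_image _

theorem ncard_inter_preimage_of_image_eq {I H : Set α} {w : Perm α} (hw : w '' I = I) :
    (I ∩ w ⁻¹' H).ncard = (I ∩ H).ncard := by
  rw [← Set.ncard_image_of_injective _ w.injective, Set.image_inter_preimage, hw]

end Perm

section SignedPerm

open Equiv

variable {α : Type*} [InvolutiveNeg α] {I H H' : Set α}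

/-- The hyperoctahedral group of a type with an involutive negation: the permutations commuting
with negation. -/
def signedPerm (α : Type*) [InvolutiveNeg α] : Subgroup (Perm α) :=
  Subgroup.centralizer {Equiv.neg α}

theorem mem_signedPerm {w : Perm α} : w ∈ signedPerm α ↔ ∀ x, w (-x) = -w x := by
  simp [signedPerm, Subgroup.mem_centralizer_singleton_iff, Perm.ext_iff]

/-- A half contains exactly one element of each pair `{x, -x}`. Halves encode choices of signs:
`H` is thought of as the set of elements declared positive. -/
def IsHalf (H : Set α) : Prop :=
  ∀ x, -x ∈ H ↔ x ∉ H

theorem IsHalf.preimage (hH : IsHalf H) {w : Perm α} (hw : w ∈ signedPerm α) :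
    IsHalf (w ⁻¹' H) := fun x => by
  rw [Set.mem_preimage, mem_signedPerm.1 hw, hH, Set.mem_preimage]

open scoped Classical in
theorem exists_signedPerm_preimage_eq_of_isHalf (hH : IsHalf H) (hH' : IsHalf H') :
    ∃ v ∈ signedPerm α, v ⁻¹' H = H' ∧ ∀ x, (x ∈ H ↔ x ∈ H') → v x = x := by
  let S : Set α := {x | ¬(x ∈ H ↔ x ∈ H')}
  have neg_mem_S : ∀ x, Equiv.neg α x ∈ S ↔ x ∈ S := fun x => by
    simp only [S, Set.mem_ofPred_eq, Equiv.neg_apply, hH x, hH' x, not_iff_not]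
  let v : Perm α := Perm.ofSubtype ((Equiv.neg α).subtypePerm neg_mem_S)
  have v_of_mem : ∀ x ∈ S, v x = -x := fun x hx => Perm.ofSubtype_apply_of_mem _ hx
  have v_of_notMem : ∀ x ∉ S, v x = x := fun x hx => Perm.ofSubtype_apply_of_not_mem _ hx
  refine ⟨v, mem_signedPerm.2 fun x => ?_, Set.ext fun x => ?_,
    fun x hx => v_of_notMem x (not_not.2 hx)⟩
  · by_cases hx : x ∈ S
    · rw [v_of_mem x hx, v_of_mem (-x) ((neg_mem_S x).2 hx)]
    · rw [v_of_notMem x hx, v_of_notMem (-x) (mt (neg_mem_S x).1 hx)]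
  · by_cases hx : x ∈ S
    · rw [Set.mem_preimage, v_of_mem x hx, hH x]
      exact not_iff.1 hx
    · rw [Set.mem_preimage, v_of_notMem x hx]
      exact not_not.1 hx

open scoped Classical in
theorem exists_signedPerm_extending_perm (hI : ∀ x ∈ I, -x ∉ I) (s : Perm I) :
    ∃ u ∈ signedPerm α, ∀ x : I, u x = s x := by
  let N : Perm α := Equiv.neg α
  let t : Perm α := Perm.ofSubtype s
  have t_of_notMem : ∀ x ∉ I, t x = x := fun x hx => Perm.ofSubtype_apply_of_not_mem s hx
  have conj_of_mem : ∀ x ∈ I, (N * t * N) x = x := fun x hx => by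
    simp [N, t_of_notMem (-x) (hI x hx)]
  have hNN : N * N = 1 := Perm.ext fun x => neg_neg x
  -- `t` is supported on `I` and its conjugate on `-I`, so they commute and negation swaps them.
  have hcomm : Commute t (N * t * N) := Perm.Disjoint.commute fun x =>
    (em (x ∈ I)).symm.imp (t_of_notMem x) (conj_of_mem x)
  refine ⟨t * (N * t * N), Subgroup.mem_centralizer_singleton_iff.2 ?_, fun x => ?_⟩
  · calc t * (N * t * N) * N = t * N * t * (N * N) := by group
      _ = N * N * t * N * t := by rw [hNN]; group
      _ = N * ((N * t * N) * t) := by group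
      _ = N * (t * (N * t * N)) := by rw [hcomm.eq]
  · rw [Perm.mul_apply, conj_of_mem x x.2]
    exact Perm.ofSubtype_apply_coe s x

theorem exists_signedPerm_image_eq_preimage_eq [Finite I] (hI : ∀ x ∈ I, -x ∉ I)
    (hH : IsHalf H) (hH' : IsHalf H') (hcard : (I ∩ H).ncard = (I ∩ H').ncard) :
    ∃ k ∈ signedPerm α, k '' I = I ∧ k ⁻¹' H = H' := by
  have ncard_val_preimage (A : Set α) :
      (Subtype.val ⁻¹' A : Set I).ncard = (I ∩ A).ncard := by
    rw [← Set.ncard_image_of_injective _ Subtype.val_injective, Subtype.image_preimage_coe]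
  obtain ⟨s, hs⟩ : ∃ s : Perm I, s ⁻¹' (Subtype.val ⁻¹' H) = Subtype.val ⁻¹' H' :=
    exists_perm_preimage_eq_of_ncard_eq (by simpa only [ncard_val_preimage] using hcard)
  obtain ⟨u, hu, hus⟩ := exists_signedPerm_extending_perm hI s
  have u_mem_iff : ∀ x ∈ I, x ∈ u ⁻¹' H ↔ x ∈ H' := fun x hx => by
    rw [Set.mem_preimage, hus ⟨x, hx⟩]
    exact Set.ext_iff.1 hs ⟨x, hx⟩
  obtain ⟨v, hv, hvH, hv_fix⟩ := exists_signedPerm_preimage_eq_of_isHalf (hH.preimage hu) hH'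
  have image_u : u '' I = I := by
    calc u '' I = Set.range (Subtype.val ∘ s) := by
          simp only [Set.image_eq_range, hus, Function.comp_def]
      _ = I := by rw [s.surjective.range_comp Subtype.val, Subtype.range_coe]
  have image_v : v '' I = I :=
    (Set.image_congr fun x hx => hv_fix x (u_mem_iff x hx)).trans (Set.image_id' I)
  refine ⟨u * v, mul_mem hu hv, ?_, hvH⟩
  rw [Perm.coe_mul, Set.image_comp, image_v, image_u]

end SignedPerm

namespace SIdx

open Equiv

variable {n : ℕ}

instance : InvolutiveNeg (SIdx n) where
  neg_neg x := Subtype.ext (neg_neg x.1)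

theorem isSignedPerm_iff_mem {w : Perm (SIdx n)} : IsSignedPerm w ↔ w ∈ signedPerm (SIdx n) :=
  mem_signedPerm.symm

/-- The positive indices `{1, …, n}`. -/
def positives (n : ℕ) : Set (SIdx n) := {x | 0 < x.1}

/-- The indices `{1, …, min m n}`, written `{1, …, m}` in the definition of `W_Q`. -/
def initial (n m : ℕ) : Set (SIdx n) := {x | 0 < x.1 ∧ x.1 ≤ (m : ℤ)}

theorem isHalf_positives : IsHalf (positives n) := fun x => by
  change 0 < -x.1 ↔ ¬0 < x.1
  have := x.2.1
  omega

theorem neg_notMem_initial {m : ℕ} : ∀ x ∈ initial n m, -x ∉ initial n m :=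
  fun x hx hnx => (isHalf_positives x).1 hnx.1 hx.1

theorem val_injective : Function.Injective (Subtype.val : SIdx n → ℤ) :=
  Subtype.val_injective

theorem val_image_initial {d : ℕ} (hd : d ≤ n) :
    Subtype.val '' initial n d = Set.Icc (1 : ℤ) d := by
  ext z
  constructor
  · rintro ⟨x, hx, rfl⟩
    exact hx
  · rintro ⟨h1, hzd⟩
    exact ⟨⟨z, by omega, by omega⟩, ⟨h1, hzd⟩, rfl⟩

theorem ncard_initial {d : ℕ} (hd : d ≤ n) : (initial n d).ncard = d := by
  calc (initial n d).ncard
    _ = (Set.Icc (1 : ℤ) d).ncard := by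
      rw [← val_image_initial hd]
      exact (Set.ncard_image_of_injective _ val_injective).symm
    _ = d := by simp [Set.ncard_eq_toFinset_card']

instance (m : ℕ) : Finite (initial n m) :=
  Set.Finite.of_injOn (f := Subtype.val) (t := Set.Icc (1 : ℤ) m) (fun _ hx => hx)
    val_injective.injOn (Set.finite_Icc _ _)

theorem posCount_eq_ncard_inter (m : ℕ) (w : Perm (SIdx n)) :
    posCount m w = (initial n m ∩ w ⁻¹' positives n).ncard :=
  congrArg Set.ncard (Set.ext fun _ => and_assoc.symm)

theorem inWP_iff {h : Perm (SIdx n)} :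
    InWP h ↔ h ∈ signedPerm (SIdx n) ∧ h ⁻¹' positives n = positives n := by
  rw [InWP, isSignedPerm_iff_mem]
  refine and_congr_right fun hh => ⟨fun hpos => ?_, fun hpre x hx => hpre.ge hx⟩
  refine Set.Subset.antisymm (fun x hx => ?_) hpos
  by_contra hneg
  exact (isHalf_positives.preimage hh x).1 (hpos _ ((isHalf_positives x).2 hneg)) hx

theorem inWQ_iff {m : ℕ} {k : Perm (SIdx n)} :
    InWQ m k ↔ k ∈ signedPerm (SIdx n) ∧ k '' initial n m = initial n m :=
  and_congr_left' isSignedPerm_iff_mem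

theorem sameDC_iff_exists_preimage_eq {m : ℕ} {w w' : Perm (SIdx n)}
    (hw : w ∈ signedPerm (SIdx n)) (hw' : w' ∈ signedPerm (SIdx n)) :
    SameDC m w w' ↔
      ∃ k, InWQ m k ∧ k ⁻¹' (w ⁻¹' positives n) = w' ⁻¹' positives n := by
  constructor
  · rintro ⟨h, k, hh, hk, rfl⟩
    refine ⟨k, hk, ?_⟩
    simp only [Perm.coe_mul, Set.preimage_comp, (inWP_iff.1 hh).2]
  · rintro ⟨k, hk, hpre⟩
    have hk' := (inWQ_iff.1 hk).1
    refine ⟨w' * (w * k)⁻¹, k, inWP_iff.2 ⟨mul_mem hw' (inv_mem (mul_mem hw hk')), ?_⟩, hk,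
      by group⟩
    calc ⇑(w' * (w * k)⁻¹) ⁻¹' positives n
      _ = ⇑(w * k)⁻¹ ⁻¹' (⇑(w * k) ⁻¹' positives n) := congrArg (⇑(w * k)⁻¹ ⁻¹' ·) hpre.symm
      _ = positives n := (w * k).symm_preimage_preimage _

theorem sameDC_iff_posCount_eq {m : ℕ} {w w' : Perm (SIdx n)}
    (hw : w ∈ signedPerm (SIdx n)) (hw' : w' ∈ signedPerm (SIdx n)) :
    SameDC m w w' ↔ posCount m w = posCount m w' := by
  rw [sameDC_iff_exists_preimage_eq hw hw', posCount_eq_ncard_inter, posCount_eq_ncard_inter]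
  constructor
  · rintro ⟨k, hk, hpre⟩
    rw [← hpre, ncard_inter_preimage_of_image_eq (inWQ_iff.1 hk).2]
  · intro hcard
    obtain ⟨k, hk, himage, hpre⟩ := exists_signedPerm_image_eq_preimage_eq neg_notMem_initial
      (isHalf_positives.preimage hw) (isHalf_positives.preimage hw') hcard
    exact ⟨k, inWQ_iff.2 ⟨hk, himage⟩, hpre⟩

theorem exists_posCount_eq {m d : ℕ} (hdm : d ≤ m) (hdn : d ≤ n) :
    ∃ w ∈ signedPerm (SIdx n), posCount m w = d := by
  let H : Set (SIdx n) := {x | 0 < x.1 ∧ x.1 ≤ d ∨ x.1 < -d}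
  have hH : IsHalf H := fun x => by
    change 0 < -x.1 ∧ -x.1 ≤ d ∨ -x.1 < -d ↔ ¬(0 < x.1 ∧ x.1 ≤ d ∨ x.1 < -d)
    have := x.2.1
    omega
  have inter_H : initial n m ∩ H = initial n d := by
    ext x
    change (0 < x.1 ∧ x.1 ≤ m) ∧ (0 < x.1 ∧ x.1 ≤ d ∨ x.1 < -d) ↔ 0 < x.1 ∧ x.1 ≤ d
    omega
  obtain ⟨w, hw, hpre, -⟩ := exists_signedPerm_preimage_eq_of_isHalf isHalf_positives hH
  exact ⟨w, hw, by rw [posCount_eq_ncard_inter, hpre, inter_H, ncard_initial hdn]⟩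

end SIdx

/-- Two elements of `B_n` lie in the same `(W_P, W_Q)` double coset iff
`#{j ∈ {1,…,m} : w(j) > 0}` agree; the double cosets are exactly the `m+1` sets
`E_d`, `0 ≤ d ≤ m` (each of which is nonempty). -/
theorem stmt_11 (n m : ℕ) (hn : 1 ≤ n) (hm1 : 1 ≤ m) (hmn : m ≤ n) :
    (∀ w w' : Equiv.Perm (SIdx n), IsSignedPerm w → IsSignedPerm w' →
      (SameDC m w w' ↔ posCount m w = posCount m w')) ∧
    (∀ d : ℕ, d ≤ m → ∃ w : Equiv.Perm (SIdx n), IsSignedPerm w ∧ posCount m w = d) := by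
  simp only [SIdx.isSignedPerm_iff_mem]
  exact ⟨fun w w' => SIdx.sameDC_iff_posCount_eq,
    fun d hdm => SIdx.exists_posCount_eq hdm (hdm.trans hmn)⟩
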